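/- Let M be a Malcev algebra over F lying in the variety H, containing L = sl2(F), and such that mL ≠ 0 for every nonzero m ∈ M. Then M = N_M ⊕ J_M as F-vector spaces, and this decomposition is a Z/2-grading of the algebra M: N_M·N_M ⊆ N_M (even part), N_M·J_M + J_M·N_M ⊆ J_M, and J_M·J_M ⊆ N_M (odd part J_M). -/

import Mathlib

section
variable {K : Type*} [Field K] {M : Type*} [AddCommGroup M] [Module K M]

/-- the Jacobian `J(x,y,z) = (xy)z + (yz)x + (zx)y` -/
def mjac (μ : M →ₗ[K] M →ₗ[K] M) (x y z : M) : M :=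
  μ (μ x y) z + μ (μ y z) x + μ (μ z x) y

/-- `{x,y,z} = (xy)z − (xz)y + 2·x(yz)` -/
def mbr (μ : M →ₗ[K] M →ₗ[K] M) (x y z : M) : M :=
  μ (μ x y) z - μ (μ x z) y + (2 : K) • μ x (μ y z)

/-- `h(y,z,t,x,u) = {yz,t,u}x + {yz,t,x}u + {yx,z,u}t + {yu,z,x}t` -/
def mh (μ : M →ₗ[K] M →ₗ[K] M) (y z t x u : M) : M :=
  μ (mbr μ (μ y z) t u) x + μ (mbr μ (μ y z) t x) u +
    μ (mbr μ (μ y x) z u) t + μ (mbr μ (μ y u) z x) t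

/-- A Malcev algebra structure: anticommutative (`x·x = 0`) together with the Malcev
identity `(xz)(yt) = ((xy)z)t + ((yz)t)x + ((zt)x)y + ((tx)y)z`. -/
def IsMalcev (μ : M →ₗ[K] M →ₗ[K] M) : Prop :=
  (∀ x, μ x x = 0) ∧
    ∀ x y z t, μ (μ x z) (μ y t) =
      μ (μ (μ x y) z) t + μ (μ (μ y z) t) x + μ (μ (μ z t) x) y + μ (μ (μ t x) y) z

/-- the variety 𝓗 : `h(y,z,t,x,u) = 0` identically -/
def InVarietyH (μ : M →ₗ[K] M →ₗ[K] M) : Prop := ∀ y z t x u, mh μ y z t x u = 0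

/-- `N_M = {m | J(m,a,b) = 0 ∀ a,b ∈ L}` -/
def NMset (μ : M →ₗ[K] M →ₗ[K] M) (L : Submodule K M) : Set M :=
  {m : M | ∀ a ∈ L, ∀ b ∈ L, mjac μ m a b = 0}

/-- `J_M = {m | {m,a,b} = 0 ∀ a,b ∈ L}` -/
def JMset (μ : M →ₗ[K] M →ₗ[K] M) (L : Submodule K M) : Set M :=
  {m : M | ∀ a ∈ L, ∀ b ∈ L, mbr μ m a b = 0}

/-- the centroid Γ(M): linear operators commuting with all multiplications -/
def centroid (μ : M →ₗ[K] M →ₗ[K] M) : Set (Module.End K M) :=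
  {α | ∀ x y : M, α (μ x y) = μ x (α y) ∧ α (μ x y) = μ (α x) y}

/-- `p(x,y,z,t) = −{zt,x,y} − {yt,z,x} + {xt,y,z}` -/
def pfun (μ : M →ₗ[K] M →ₗ[K] M) (x y z t : M) : M :=
  -(mbr μ (μ z t) x y) - mbr μ (μ y t) z x + mbr μ (μ x t) y z

/-- `U`: the span of the operators `α(y,a,b) : x ↦ p(x,y,a,b)` with `y ∈ M`, `a,b ∈ L` -/
def Uspan (μ : M →ₗ[K] M →ₗ[K] M) (L : Submodule K M) : Submodule K (Module.End K M) :=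
  Submodule.span K {φ : Module.End K M | ∃ y : M, ∃ a ∈ L, ∃ b ∈ L, ∀ x, φ x = pfun μ x y a b}

/-- `N_M = L·U`: the span of the elements `aα`, `a ∈ L`, `α ∈ U` -/
def NMspan (μ : M →ₗ[K] M →ₗ[K] M) (L : Submodule K M) : Submodule K M :=
  Submodule.span K {m : M | ∃ a ∈ L, ∃ φ ∈ Uspan μ L, m = φ a}

/-- the linear operator `m ↦ J(m,a,b)` -/
def jop (μ : M →ₗ[K] M →ₗ[K] M) (a b : M) : M →ₗ[K] M :=
  μ.flip b ∘ₗ μ.flip a + μ (μ a b) + μ.flip a ∘ₗ μ b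

/-- the linear operator `m ↦ {m,a,b}` -/
def bop (μ : M →ₗ[K] M →ₗ[K] M) (a b : M) : M →ₗ[K] M :=
  μ.flip b ∘ₗ μ.flip a - μ.flip a ∘ₗ μ.flip b + (2 : K) • μ.flip (μ a b)

/-- `N_M` as a submodule (intersection of the kernels of `m ↦ J(m,a,b)`, `a,b ∈ L`) -/
def NMker (μ : M →ₗ[K] M →ₗ[K] M) (L : Submodule K M) : Submodule K M :=
  ⨅ (a : M) (_ : a ∈ L) (b : M) (_ : b ∈ L), LinearMap.ker (jop μ a b)

/-- `J_M` as a submodule (intersection of the kernels of `m ↦ {m,a,b}`, `a,b ∈ L`) -/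
def JMker (μ : M →ₗ[K] M →ₗ[K] M) (L : Submodule K M) : Submodule K M :=
  ⨅ (a : M) (_ : a ∈ L) (b : M) (_ : b ∈ L), LinearMap.ker (bop μ a b)

/-- `Ann_M L` as a set -/
def AnnSet (μ : M →ₗ[K] M →ₗ[K] M) (L : Submodule K M) : Set M :=
  {m : M | ∀ a ∈ L, μ m a = 0}

/-- `Ann_M L` as a submodule -/
def Annker (μ : M →ₗ[K] M →ₗ[K] M) (L : Submodule K M) : Submodule K M :=
  ⨅ (a : M) (_ : a ∈ L), LinearMap.ker (μ.flip a)

/-- `V = {w ∈ J_M : wH = w, wF = 0}` as a set -/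
def Vset (μ : M →ₗ[K] M →ₗ[K] M) (L : Submodule K M) (Hm Fm : M) : Set M :=
  {w : M | w ∈ JMset μ L ∧ μ w Hm = w ∧ μ w Fm = 0}

/-- `V = {w ∈ J_M : wH = w, wF = 0}` as a submodule -/
def Vsub (μ : M →ₗ[K] M →ₗ[K] M) (L : Submodule K M) (Hm Fm : M) : Submodule K M :=
  JMker μ L ⊓ LinearMap.ker (μ.flip Hm - LinearMap.id) ⊓ LinearMap.ker (μ.flip Fm)

/-!
On a Lie subalgebra `L` of a Malcev algebra, left multiplication by `xy` is `τ(x, y) - 2 σ(x, y)`,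
where `τ(x, y)` is proportional to `m ↦ {m, x, y}` and `σ(x, y)` to `m ↦ J(m, x, y)`. When `L` is
a copy of `sl₂`, `τ` and `σ` are two representations of `sl₂` that annihilate each other, and
`N_M = ker σ`, `J_M = ker τ`. Sagle's identity leaves for `σ` only representations of dimensions
1 and 2, and the variety leaves for `τ` only those of dimensions 1 and 3. Since `τ(x, y) + σ(x, y)`
is a derivation, the Weyl group element of the representation `τ + σ` is a product of exponentials
of nilpotent derivations, hence an automorphism of `M`. Its square is `1` on the odd dimensional
constituents and `-1` on the two-dimensional ones, that is, `1` on `N_M` and `-1` on `J_M`.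
-/

attribute [local instance] LieRing.ofAssociativeRing

/-- Left multiplication `λ x : y ↦ x y`, as an element of the ring of endomorphisms of `M`. -/
def lmul (μ : M →ₗ[K] M →ₗ[K] M) : M →ₗ[K] Module.End K M := μ

theorem lmul_apply (μ : M →ₗ[K] M →ₗ[K] M) (x y : M) : lmul μ x y = μ x y := rfl

/-- `D` is a derivation of the algebra `(M, μ)`. -/
def IsDerivation (μ : M →ₗ[K] M →ₗ[K] M) (D : Module.End K M) : Prop :=
  ∀ x y, D (μ x y) = μ (D x) y + μ x (D y)

/-- The operator `D(x, y) = [λ x, λ y] + λ (xy)`, which is a derivation of a Malcev algebra. -/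
def malcevDer (μ : M →ₗ[K] M →ₗ[K] M) (x y : M) : Module.End K M :=
  ⁅lmul μ x, lmul μ y⁆ + lmul μ (μ x y)

theorem malcevDer_apply (μ : M →ₗ[K] M →ₗ[K] M) (x y z : M) :
    malcevDer μ x y z = μ x (μ y z) - μ y (μ x z) + μ (μ x y) z := rfl

theorem lie_lmul_lmul (μ : M →ₗ[K] M →ₗ[K] M) (x y : M) :
    ⁅lmul μ x, lmul μ y⁆ = malcevDer μ x y - lmul μ (μ x y) :=
  eq_sub_of_add_eq rfl

namespace IsMalcev

variable {μ : M →ₗ[K] M →ₗ[K] M}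

theorem anticomm (h : IsMalcev μ) (x y : M) : μ x y = -μ y x := by
  have := h.1 (x + y)
  simp only [map_add, LinearMap.add_apply, h.1, zero_add, add_zero] at this
  exact eq_neg_of_add_eq_zero_right this

theorem isDerivation_malcevDer (h : IsMalcev μ) (x y : M) :
    IsDerivation μ (malcevDer μ x y) := fun z w => by
  have h₁ := h.2 x y z w
  have h₂ := h.2 x z y w
  have h₃ := h.2 x w z y
  simp only [malcevDer_apply, map_add, map_sub, LinearMap.add_apply, LinearMap.sub_apply]
  simp only [h.anticomm w x, h.anticomm z y, h.anticomm y x, h.anticomm w y,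
    h.anticomm w z, h.anticomm x (μ _ _), h.anticomm y (μ _ _), h.anticomm z (μ _ _), map_neg,
    LinearMap.neg_apply] at h₁ h₂ h₃ ⊢
  linear_combination (norm := module) h₁ + h₂ + h₃

theorem lie_malcevDer_lmul (h : IsMalcev μ) (x y z : M) :
    ⁅malcevDer μ x y, lmul μ z⁆ = lmul μ (malcevDer μ x y z) := by
  ext w
  rw [Ring.lie_def, LinearMap.sub_apply, Module.End.mul_apply, Module.End.mul_apply]
  simp only [lmul_apply]
  rw [h.isDerivation_malcevDer x y, add_sub_cancel_right]

theorem malcevDer_swap (h : IsMalcev μ) (x y : M) : malcevDer μ y x = -malcevDer μ x y := by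
  rw [malcevDer, malcevDer, ← lie_skew, h.anticomm y x, map_neg, neg_add]

theorem lie_malcevDer_malcevDer (h : IsMalcev μ) (x y z w : M) :
    ⁅malcevDer μ x y, malcevDer μ z w⁆ =
      malcevDer μ (malcevDer μ x y z) w + malcevDer μ z (malcevDer μ x y w) := by
  rw [malcevDer.eq_def μ z w, lie_add, leibniz_lie, h.lie_malcevDer_lmul, h.lie_malcevDer_lmul,
    h.lie_malcevDer_lmul, h.isDerivation_malcevDer x y, map_add]
  simp only [malcevDer]
  abel

theorem jop_eq (h : IsMalcev μ) (x y : M) :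
    jop μ x y = lmul μ (μ x y) - ⁅lmul μ x, lmul μ y⁆ := by
  ext z
  simp only [jop, Ring.lie_def, LinearMap.add_apply, LinearMap.sub_apply, LinearMap.comp_apply,
    LinearMap.flip_apply, LinearMap.neg_apply, Module.End.mul_apply, lmul_apply, h.anticomm z x,
    h.anticomm _ y, h.anticomm (μ y z) x, map_neg, neg_neg]
  abel

theorem bop_eq (h : IsMalcev μ) (x y : M) :
    bop μ x y = -⁅lmul μ x, lmul μ y⁆ - (2 : K) • lmul μ (μ x y) := by
  ext z
  simp only [bop, Ring.lie_def, LinearMap.add_apply, LinearMap.sub_apply, LinearMap.comp_apply,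
    LinearMap.flip_apply, LinearMap.neg_apply, LinearMap.smul_apply, Module.End.mul_apply,
    lmul_apply, h.anticomm z x, h.anticomm z y, h.anticomm (μ x z) y, h.anticomm (μ y z) x,
    h.anticomm z (μ _ _), map_neg, smul_neg]
  abel

/-- Sagle's identity `J(m, x, xy) = J(m, x, y) x`. -/
theorem jop_mul_right (h : IsMalcev μ) (x y : M) : jop μ x (μ x y) = -(lmul μ x * jop μ x y) := by
  ext m
  have := h.2 x x m y
  simp only [jop, LinearMap.add_apply, LinearMap.comp_apply, LinearMap.flip_apply,
    LinearMap.neg_apply, Module.End.mul_apply, lmul_apply, map_add]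
  simp only [h.1, h.anticomm m x, h.anticomm y x, h.anticomm y m, h.anticomm x (μ _ _), map_neg,
    map_zero, LinearMap.neg_apply, LinearMap.zero_apply] at this ⊢
  linear_combination (norm := module) -this

end IsMalcev

/-! ### Operators of Lie subalgebras -/

/-- `L` is a subalgebra of `(M, μ)` on which the Jacobian vanishes, i.e. a Lie subalgebra. -/
structure IsLieSubalg (μ : M →ₗ[K] M →ₗ[K] M) (L : Submodule K M) : Prop where
  mul_mem : ∀ x ∈ L, ∀ y ∈ L, μ x y ∈ L
  mjac_eq_zero : ∀ x ∈ L, ∀ y ∈ L, ∀ z ∈ L, mjac μ x y z = 0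

/-- The operator `τ(x, y)`, a third of `D(x, y) + λ (xy)`. It is `-1/3` times `m ↦ {m, x, y}`, and
on a Lie subalgebra `L` the operators `τ(x, y)` multiply like the products `xy`. -/
def lieAct (μ : M →ₗ[K] M →ₗ[K] M) (x y : M) : Module.End K M :=
  (3⁻¹ : K) • (malcevDer μ x y + lmul μ (μ x y))

/-- The operator `σ(x, y)`, a sixth of `D(x, y) - 2 λ (xy)`. It is `-1/6` times `m ↦ J(m, x, y)`,
and on a Lie subalgebra `L` the operators `σ(x, y)` multiply like the products `xy`. -/
def jacAct (μ : M →ₗ[K] M →ₗ[K] M) (x y : M) : Module.End K M :=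
  (6⁻¹ : K) • (malcevDer μ x y - (2 : K) • lmul μ (μ x y))

theorem six_ne_zero_of_two_of_three (h2 : (2 : K) ≠ 0) (h3 : (3 : K) ≠ 0) : (6 : K) ≠ 0 := by
  convert mul_ne_zero h2 h3
  norm_num

theorem lmul_mul_eq (μ : M →ₗ[K] M →ₗ[K] M) (h2 : (2 : K) ≠ 0) (h3 : (3 : K) ≠ 0)
    (x y : M) :
    lmul μ (μ x y) = lieAct μ x y - (2 : K) • jacAct μ x y := by
  have h6 := six_ne_zero_of_two_of_three h2 h3
  simp only [lieAct, jacAct]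
  match_scalars <;> field_simp <;> norm_num

theorem malcevDer_eq (μ : M →ₗ[K] M →ₗ[K] M) (h2 : (2 : K) ≠ 0) (h3 : (3 : K) ≠ 0)
    (x y : M) :
    malcevDer μ x y = (2 : K) • (lieAct μ x y + jacAct μ x y) := by
  have h6 := six_ne_zero_of_two_of_three h2 h3
  simp only [lieAct, jacAct]
  match_scalars <;> field_simp <;> norm_num

namespace IsMalcev

variable {μ : M →ₗ[K] M →ₗ[K] M} {L : Submodule K M} {t x y z w : M}

theorem bop_eq_lieAct (h : IsMalcev μ) (h3 : (3 : K) ≠ 0) (x y : M) :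
    bop μ x y = (-3 : K) • lieAct μ x y := by
  rw [h.bop_eq, lieAct, malcevDer, smul_smul, neg_mul, mul_inv_cancel₀ h3]
  module

theorem jop_eq_jacAct (h : IsMalcev μ) (h6 : (6 : K) ≠ 0) (x y : M) :
    jop μ x y = (-6 : K) • jacAct μ x y := by
  rw [h.jop_eq, jacAct, malcevDer, smul_smul, neg_mul, mul_inv_cancel₀ h6]
  module

theorem malcevDer_apply_of_mem (h : IsMalcev μ) (hL : IsLieSubalg μ L) (hx : x ∈ L) (hy : y ∈ L)
    (hz : z ∈ L) : malcevDer μ x y z = (2 : K) • μ (μ x y) z := by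
  have := hL.mjac_eq_zero x hx y hy z hz
  rw [mjac, h.anticomm z x, map_neg, LinearMap.neg_apply] at this
  rw [malcevDer_apply, h.anticomm x (μ y z), h.anticomm y (μ x z)]
  linear_combination (norm := module) -this

theorem lie_malcevDer_lmul_of_mem (h : IsMalcev μ) (hL : IsLieSubalg μ L) (hx : x ∈ L)
    (hy : y ∈ L) (hz : z ∈ L) :
    ⁅malcevDer μ x y, lmul μ z⁆ = (2 : K) • lmul μ (μ (μ x y) z) := by
  rw [h.lie_malcevDer_lmul, h.malcevDer_apply_of_mem hL hx hy hz, map_smul]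

theorem malcevDer_cyclic (h : IsMalcev μ) (hL : IsLieSubalg μ L) (hx : x ∈ L) (hy : y ∈ L)
    (hz : z ∈ L) : malcevDer μ (μ x y) z + malcevDer μ (μ y z) x + malcevDer μ (μ z x) y = 0 := by
  have hxyz := h.lie_malcevDer_lmul_of_mem hL hx hy hz
  have hyzx := h.lie_malcevDer_lmul_of_mem hL hy hz hx
  have hzxy := h.lie_malcevDer_lmul_of_mem hL hz hx hy
  have jac := congrArg (lmul μ) (hL.mjac_eq_zero x hx y hy z hz)
  have jacobi := lie_jacobi (lmul μ x) (lmul μ y) (lmul μ z)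
  rw [← lie_skew, ← lie_skew _ ⁅lmul μ z, _⁆, ← lie_skew _ ⁅lmul μ x, _⁆] at jacobi
  simp only [malcevDer, mjac, add_lie, map_add, map_zero] at hxyz hyzx hzxy jac ⊢
  linear_combination (norm := module) hxyz + hyzx + hzxy + jacobi + (3 : K) • jac

theorem lie_malcevDer_malcevDer_of_mem (h : IsMalcev μ) (hL : IsLieSubalg μ L) (hx : x ∈ L)
    (hy : y ∈ L) (hz : z ∈ L) (hw : w ∈ L) :
    ⁅malcevDer μ x y, malcevDer μ z w⁆ = (2 : K) • malcevDer μ (μ x y) (μ z w) := by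
  have cyc := h.malcevDer_cyclic hL (hL.mul_mem x hx y hy) hz hw
  rw [h.malcevDer_swap (μ x y), h.malcevDer_swap z, h.anticomm w] at cyc
  rw [h.lie_malcevDer_malcevDer, h.malcevDer_apply_of_mem hL hx hy hz,
    h.malcevDer_apply_of_mem hL hx hy hw]
  simp only [malcevDer, map_smul, map_neg, LinearMap.smul_apply, smul_lie, lie_smul,
    lie_neg] at cyc ⊢
  linear_combination (norm := module) (2 : K) • cyc

theorem lie_lmul_malcevDer_of_mem (h : IsMalcev μ) (hL : IsLieSubalg μ L) (hx : x ∈ L)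
    (hy : y ∈ L) (hz : z ∈ L) :
    ⁅lmul μ x, malcevDer μ y z⁆ = (2 : K) • lmul μ (μ x (μ y z)) := by
  rw [← lie_skew, h.lie_malcevDer_lmul_of_mem hL hy hz hx, h.anticomm x, map_neg, smul_neg]

theorem lie_lieAct_lieAct (h : IsMalcev μ) (hL : IsLieSubalg μ L) (h3 : (3 : K) ≠ 0) (hx : x ∈ L)
    (hy : y ∈ L) (hz : z ∈ L) (hw : w ∈ L) :
    ⁅lieAct μ x y, lieAct μ z w⁆ = lieAct μ (μ x y) (μ z w) := by
  simp only [lieAct, lie_smul, smul_lie, lie_add, add_lie,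
    h.lie_malcevDer_malcevDer_of_mem hL hx hy hz hw,
    h.lie_malcevDer_lmul_of_mem hL hx hy (hL.mul_mem z hz w hw),
    h.lie_lmul_malcevDer_of_mem hL (hL.mul_mem x hx y hy) hz hw, lie_lmul_lmul]
  match_scalars <;> field_simp <;> norm_num

theorem lie_jacAct_jacAct (h : IsMalcev μ) (hL : IsLieSubalg μ L) (h6 : (6 : K) ≠ 0) (hx : x ∈ L)
    (hy : y ∈ L) (hz : z ∈ L) (hw : w ∈ L) :
    ⁅jacAct μ x y, jacAct μ z w⁆ = jacAct μ (μ x y) (μ z w) := by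
  simp only [jacAct, lie_smul, smul_lie, lie_sub, sub_lie,
    h.lie_malcevDer_malcevDer_of_mem hL hx hy hz hw,
    h.lie_malcevDer_lmul_of_mem hL hx hy (hL.mul_mem z hz w hw),
    h.lie_lmul_malcevDer_of_mem hL (hL.mul_mem x hx y hy) hz hw, lie_lmul_lmul]
  match_scalars <;> field_simp <;> norm_num

theorem commute_lieAct_jacAct (h : IsMalcev μ) (hL : IsLieSubalg μ L) (hx : x ∈ L) (hy : y ∈ L)
    (hz : z ∈ L) (hw : w ∈ L) : Commute (lieAct μ x y) (jacAct μ z w) := by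
  rw [commute_iff_lie_eq]
  simp only [lieAct, jacAct, lie_smul, smul_lie, lie_sub, add_lie,
    h.lie_malcevDer_malcevDer_of_mem hL hx hy hz hw,
    h.lie_malcevDer_lmul_of_mem hL hx hy (hL.mul_mem z hz w hw),
    h.lie_lmul_malcevDer_of_mem hL (hL.mul_mem x hx y hy) hz hw, lie_lmul_lmul]
  module

theorem lieAct_self (h : IsMalcev μ) (x : M) : lieAct μ x x = 0 := by
  rw [lieAct, malcevDer, h.1, lie_self, map_zero, add_zero, add_zero, smul_zero]

theorem jacAct_self (h : IsMalcev μ) (x : M) : jacAct μ x x = 0 := by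
  rw [jacAct, malcevDer, h.1, lie_self, map_zero, add_zero, smul_zero, sub_zero, smul_zero]

theorem lieAct_swap (h : IsMalcev μ) (x y : M) : lieAct μ y x = -lieAct μ x y := by
  rw [lieAct, h.malcevDer_swap, h.anticomm y, map_neg, ← neg_add, smul_neg, lieAct]

theorem malcevDer_neg_left (h : IsMalcev μ) (x y : M) :
    malcevDer μ (-x) y = malcevDer μ y x := by
  rw [malcevDer, map_neg, map_neg, LinearMap.neg_apply, neg_lie, lie_skew, ← h.anticomm, malcevDer]

theorem lieAct_neg_left (h : IsMalcev μ) (x y : M) : lieAct μ (-x) y = lieAct μ y x := by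
  rw [lieAct, h.malcevDer_neg_left, map_neg, LinearMap.neg_apply, ← h.anticomm, lieAct]

theorem jacAct_neg_left (h : IsMalcev μ) (x y : M) : jacAct μ (-x) y = jacAct μ y x := by
  rw [jacAct, h.malcevDer_neg_left, map_neg, LinearMap.neg_apply, ← h.anticomm, jacAct]

theorem lieAct_neg_right (h : IsMalcev μ) (x y : M) : lieAct μ x (-y) = lieAct μ y x := by
  rw [← h.lieAct_neg_left (-y), neg_neg]

theorem jacAct_neg_right (h : IsMalcev μ) (x y : M) : jacAct μ x (-y) = jacAct μ y x := by
  rw [← h.jacAct_neg_left (-y), neg_neg]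

theorem lmul_mul_jacAct_eq_zero (h : IsMalcev μ) (h6 : (6 : K) ≠ 0) (hxy : μ y x = x) :
    lmul μ x * jacAct μ y x = 0 := by
  have := h.jop_mul_right x (-y)
  rw [map_neg, ← h.anticomm y, hxy, h.jop_eq_jacAct h6, h.jop_eq_jacAct h6, h.jacAct_neg_right,
    h.jacAct_self, smul_zero, mul_smul_comm, neg_smul, neg_neg] at this
  exact (smul_eq_zero_iff_right h6).1 this.symm

theorem lmul_mul_lieAct_mul_lmul_add (h : IsMalcev μ) (h2 : (2 : K) ≠ 0) (h3 : (3 : K) ≠ 0)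
    (hV : ∀ m, mh μ m z t x x = 0) :
    lmul μ x * lieAct μ t x * lmul μ z + lmul μ t * lieAct μ z x * lmul μ x = 0 := by
  have mbr_eq (m a b : M) : mbr μ m a b = (-3 : K) • lieAct μ a b m :=
    LinearMap.congr_fun (h.bop_eq_lieAct h3 a b) m
  ext m
  have := hV m
  simp only [mh, mbr_eq, h.anticomm m, map_smul, map_neg, LinearMap.smul_apply,
    h.anticomm (lieAct _ _ _ _), LinearMap.neg_apply] at this
  refine (smul_eq_zero_iff_right (six_ne_zero_of_two_of_three h2 h3)).1 ?_
  simp only [LinearMap.add_apply, Module.End.mul_apply, lmul_apply]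
  linear_combination (norm := module) -this

end IsMalcev

/-! ### Weyl group elements -/

/-- The commutation relations of `sl₂` in the basis `h, e, f` with `[h, e] = e`, `[f, h] = f`,
`[e, f] = h`, where `h` is half the usual one so that no scalar occurs. -/
structure Sl2Relations {A : Type*} [Ring A] (h e f : A) : Prop where
  lie_h_e : ⁅h, e⁆ = e
  lie_f_h : ⁅f, h⁆ = f
  lie_e_f : ⁅e, f⁆ = h

/-- The truncation `1 + x + x² / 2` of the exponential series, which is the exponential of `x`
when `x³ = 0`. -/
def truncExp (K : Type*) [Field K] {A : Type*} [Ring A] [Algebra K A] (x : A) : A :=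
  1 + x + (2⁻¹ : K) • (x * x)

/-- The Weyl group element `exp (2e) exp (-f) exp (2e)` of a representation of `sl₂` in which
`e³ = f³ = 0`; conjugation by it exchanges the two root spaces. -/
def weylElt (K : Type*) [Field K] {A : Type*} [Ring A] [Algebra K A] (e f : A) : A :=
  truncExp K ((2 : K) • e) * truncExp K (-f) * truncExp K ((2 : K) • e)

section TruncExp

variable {A : Type*} [Ring A] [Algebra K A] {x y E F e f : A}

theorem commute_truncExp (h : Commute x y) : Commute (truncExp K x) (truncExp K y) :=
  have hx : Commute x (truncExp K y) :=
    ((Commute.one_right x).add_right h).add_right ((h.mul_right h).smul_right _)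
  ((Commute.one_left _).add_left hx).add_left ((hx.mul_left hx).smul_left _)

theorem truncExp_add_of_mul_eq_zero (hxy : x * y = 0) (hyx : y * x = 0) :
    truncExp K (x + y) = truncExp K x * truncExp K y := by
  have hxxy : x * x * y = 0 := by rw [mul_assoc, hxy, mul_zero]
  have hxyy : x * (y * y) = 0 := by rw [← mul_assoc, hxy, zero_mul]
  have hxxyy : x * x * (y * y) = 0 := by rw [mul_assoc, hxyy, mul_zero]
  simp only [truncExp, mul_add, add_mul, mul_one, one_mul, smul_mul_assoc, mul_smul_comm, hxy, hyx,
    hxxy, hxyy, hxxyy]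
  module

theorem weylElt_add_of_mul_eq_zero (hEe : E * e = 0) (heE : e * E = 0) (hEf : E * f = 0)
    (hfE : f * E = 0) (hFe : F * e = 0) (heF : e * F = 0) (hFf : F * f = 0) (hfF : f * F = 0) :
    weylElt K (E + e) (F + f) = weylElt K E F * weylElt K e f ∧
      Commute (weylElt K E F) (weylElt K e f) := by
  have hadd_e : truncExp K ((2 : K) • (E + e)) =
      truncExp K ((2 : K) • E) * truncExp K ((2 : K) • e) := by
    rw [smul_add, truncExp_add_of_mul_eq_zero (by rw [smul_mul_smul_comm, hEe, smul_zero])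
      (by rw [smul_mul_smul_comm, heE, smul_zero])]
  have hadd_f : truncExp K (-(F + f)) = truncExp K (-F) * truncExp K (-f) := by
    rw [neg_add, truncExp_add_of_mul_eq_zero (by rw [neg_mul_neg, hFf])
      (by rw [neg_mul_neg, hfF])]
  have cEe : Commute (truncExp K ((2 : K) • E)) (truncExp K ((2 : K) • e)) :=
    commute_truncExp ((Commute.smul_left (hEe.trans heE.symm) _).smul_right _)
  have cEf : Commute (truncExp K ((2 : K) • E)) (truncExp K (-f)) :=
    commute_truncExp (Commute.smul_left (hEf.trans hfE.symm) _).neg_right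
  have cFe : Commute (truncExp K (-F)) (truncExp K ((2 : K) • e)) :=
    commute_truncExp (Commute.smul_right (hFe.trans heF.symm) _).neg_left
  have cFf : Commute (truncExp K (-F)) (truncExp K (-f)) :=
    commute_truncExp (Commute.neg_left (hFf.trans hfF.symm)).neg_right
  constructor
  · simp only [weylElt, hadd_e, hadd_f]
    rw [cFe.symm.mul_mul_mul_comm, (cEe.symm.mul_left cEf.symm).mul_mul_mul_comm]
  · have cE := (cEe.mul_right cEf).mul_right cEe
    have cF := (cFe.mul_right cFf).mul_right cFe
    exact (cE.mul_left cF).mul_left cE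

end TruncExp

namespace Sl2Relations

variable {A : Type*} [Ring A] {h e f s : A}

theorem symm (R : Sl2Relations h e f) : Sl2Relations (-h) f e where
  lie_h_e := by rw [neg_lie, lie_skew, R.lie_f_h]
  lie_f_h := by rw [lie_neg, lie_skew, R.lie_h_e]
  lie_e_f := by rw [← lie_skew, R.lie_e_f]

theorem mul_eq_zero_of_commute (R : Sl2Relations h e f) (he : Commute s e) (hf : Commute s f)
    (hfe : Commute f (e * s)) : h * s = 0 ∧ e * s = 0 ∧ f * s = 0 := by
  have hs : h * s = 0 := by
    rw [← R.lie_e_f, Ring.lie_def, sub_mul, mul_assoc f, hfe.eq, mul_assoc, mul_assoc, hf.eq,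
      sub_self]
  refine ⟨hs, ?_, ?_⟩
  · rw [← R.lie_h_e, Ring.lie_def, sub_mul, mul_assoc, mul_assoc, hs, ← he.eq, ← mul_assoc, hs,
      zero_mul, mul_zero, sub_zero]
  · rw [← R.lie_f_h, Ring.lie_def, sub_mul, mul_assoc, mul_assoc, hs, ← hf.eq, ← mul_assoc, hs,
      zero_mul, mul_zero, sub_zero]

variable [Algebra K A]

theorem two_smul_e_f_e_of_sq_eq_zero (R : Sl2Relations h e f) (he : e * e = 0) :
    (2 : K) • (e * f * e) = e := by
  have := R.lie_h_e
  rw [← R.lie_e_f, Ring.lie_def, Ring.lie_def, sub_mul, mul_sub, mul_assoc f, ← mul_assoc e e,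
    he, ← mul_assoc e f, mul_zero, zero_mul] at this
  linear_combination (norm := module) this

theorem two_smul_e_mul_h_of_sq_eq_zero (R : Sl2Relations h e f) (he : e * e = 0) :
    (2 : K) • (e * h) = -e := by
  rw [← R.lie_e_f, Ring.lie_def, mul_sub, ← mul_assoc, he, zero_mul, zero_sub, ← mul_assoc,
    smul_neg, R.two_smul_e_f_e_of_sq_eq_zero he]

theorem e_mul_four_h_sq_of_sq_eq_zero (R : Sl2Relations h e f) (he : e * e = 0) :
    e * ((4 : K) • (h * h)) = e := by
  have eh := R.two_smul_e_mul_h_of_sq_eq_zero (K := K) he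
  calc e * ((4 : K) • (h * h)) = (2 : K) • (((2 : K) • (e * h)) * h) := by
        simp only [smul_mul_assoc, mul_smul_comm, mul_assoc]
        module
    _ = e := by rw [eh, neg_mul, smul_neg, eh, neg_neg]

theorem f_mul_four_h_sq_of_sq_eq_zero (R : Sl2Relations h e f) (hf : f * f = 0) :
    f * ((4 : K) • (h * h)) = f := by
  simpa only [neg_mul_neg] using R.symm.e_mul_four_h_sq_of_sq_eq_zero (K := K) hf

theorem h_mul_four_h_sq_of_sq_eq_zero (R : Sl2Relations h e f) (he : e * e = 0) (hf : f * f = 0) :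
    h * ((4 : K) • (h * h)) = h := by
  nth_rw 1 [← R.lie_e_f]
  rw [Ring.lie_def, sub_mul, mul_assoc, mul_assoc, R.f_mul_four_h_sq_of_sq_eq_zero hf,
    R.e_mul_four_h_sq_of_sq_eq_zero he, ← Ring.lie_def, R.lie_e_f]

theorem two_smul_e_sub_f_sq_of_sq_eq_zero (R : Sl2Relations h e f) (he : e * e = 0)
    (hf : f * f = 0) :
    ((2 : K) • e - f) * ((2 : K) • e - f) = -((4 : K) • (h * h)) := by
  have eh := R.two_smul_e_mul_h_of_sq_eq_zero (K := K) he
  have fh := R.symm.two_smul_e_mul_h_of_sq_eq_zero (K := K) hf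
  rw [mul_neg, smul_neg, neg_inj] at fh
  calc ((2 : K) • e - f) * ((2 : K) • e - f) = -((2 : K) • (e * f + f * e)) := by
        simp only [mul_sub, sub_mul, smul_mul_assoc, mul_smul_comm, he, hf]
        module
    _ = -((2 : K) • (e * ((2 : K) • (f * h)) - f * ((2 : K) • (e * h)))) := by
        rw [eh, fh, mul_neg, sub_neg_eq_add]
    _ = -((4 : K) • (⁅e, f⁆ * h)) := by
        simp only [Ring.lie_def, sub_mul, mul_smul_comm, mul_assoc]
        module
    _ = -((4 : K) • (h * h)) := by rw [R.lie_e_f]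

-- When `e² = f² = 0` only the representations of dimensions 1 and 2 occur; the right-hand side is
-- `1` on the former and `-1` on the latter.
theorem weylElt_sq_of_sq_eq_zero (R : Sl2Relations h e f) (he : e * e = 0) (hf : f * f = 0) :
    weylElt K e f * weylElt K e f = 1 - (8 : K) • (h * h) := by
  obtain ⟨k, hk⟩ : ∃ k, k = (2 : K) • e - f := ⟨_, rfl⟩
  have k_sq : k * k = -((4 : K) • (h * h)) := by
    rw [hk, R.two_smul_e_sub_f_sq_of_sq_eq_zero he hf]
  have k_cube : k * (k * k) = -k := by
    rw [k_sq, mul_neg, hk, sub_mul, smul_mul_assoc, R.e_mul_four_h_sq_of_sq_eq_zero he,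
      R.f_mul_four_h_sq_of_sq_eq_zero hf]
  have weyl : weylElt K e f = 1 + k + k * k := by
    have truncExp_e : truncExp K ((2 : K) • e) = 1 + (2 : K) • e := by
      rw [truncExp, smul_mul_smul_comm, he, smul_zero, smul_zero, add_zero]
    have truncExp_f : truncExp K (-f) = 1 - f := by
      rw [truncExp, neg_mul_neg, hf, smul_zero, add_zero, sub_eq_add_neg]
    rw [weylElt, truncExp_e, truncExp_f, hk]
    simp only [mul_add, mul_sub, add_mul, sub_mul, smul_mul_assoc, mul_smul_comm, one_mul, mul_one,
      he, hf]
    linear_combination (norm := module) (-2 : K) • R.two_smul_e_f_e_of_sq_eq_zero (K := K) he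
  calc weylElt K e f * weylElt K e f
      = 1 + (2 : K) • (k + k * (k * k)) + (3 : K) • (k * k) + k * (k * (k * k)) := by
        rw [weyl]
        simp only [mul_add, add_mul, mul_one, one_mul, mul_assoc]
        module
    _ = 1 + (2 : K) • (k * k) := by
        rw [k_cube, mul_neg]
        module
    _ = 1 - (8 : K) • (h * h) := by
        rw [k_sq]
        module

theorem e_e_f_add_f_e_e (R : Sl2Relations h e f) (efe : e * f * e = e) :
    e * e * f + f * e * e = e := by
  have := R.lie_h_e
  rw [← R.lie_e_f, Ring.lie_def, Ring.lie_def, sub_mul, mul_sub, ← mul_assoc, ← mul_assoc,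
    efe] at this
  linear_combination (norm := abel) -this

theorem e_f_e_of_h_e_h (R : Sl2Relations h e f) (heh : h * e * h = 0)
    (eef : e * e * f = h * h * e) : e * f * e = e := by
  have hhe : h * h * e = h * e := by
    have := congrArg (h * ·) R.lie_h_e
    simpa only [Ring.lie_def, mul_sub, ← mul_assoc, heh, sub_zero] using this
  calc e * f * e = e * e * f - e * ⁅e, f⁆ := by
        rw [Ring.lie_def, mul_sub, ← mul_assoc, ← mul_assoc]
        abel
    _ = ⁅h, e⁆ := by rw [eef, hhe, R.lie_e_f, Ring.lie_def]
    _ = e := R.lie_h_e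

theorem weylElt_of_mul_mul_self_eq (R : Sl2Relations h e f) (h2 : (2 : K) ≠ 0)
    (eee : e * e * e = 0) (efe : e * f * e = e) (fef : f * e * f = f) :
    weylElt K e f = 1 + (2⁻¹ : K) • (((2 : K) • e - f) * ((2 : K) • e - f)) := by
  have fee : f * e * e = e - e * e * f := eq_sub_of_add_eq' (R.e_e_f_add_f_e_e efe)
  have ffe : f * f * e = f - e * f * f := eq_sub_of_add_eq (R.symm.e_e_f_add_f_e_e fef)
  have eefe : e * e * f * e = e * e := by rw [mul_assoc e e, mul_assoc e, efe]
  obtain ⟨X, hX⟩ : ∃ X, X = 1 + (2 : K) • e + (2 : K) • (e * e) := ⟨_, rfl⟩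
  have truncExp_e : truncExp K ((2 : K) • e) = X := by
    rw [truncExp, hX, smul_mul_smul_comm, smul_smul, inv_mul_cancel_left₀ h2]
  have fX : f * X = f + (2 : K) • (f * e) + (2 : K) • e - (2 : K) • (e * e * f) := by
    rw [hX]
    simp only [mul_add, mul_one, mul_smul_comm, ← mul_assoc, fee]
    module
  have ffX : f * (f * X) = f * f + (2 : K) • f - (2 : K) • (e * f * f) + (2 : K) • (f * e)
      - (2 : K) • (e * f) + (2 : K) • (e * e * f * f) := by
    rw [fX]
    simp only [mul_add, mul_sub, mul_smul_comm, ← mul_assoc, fee, ffe, sub_mul]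
    module
  calc weylElt K e f = X * X - X * (f * X) + (2⁻¹ : K) • (X * (f * (f * X))) := by
        rw [weylElt, truncExp_e, truncExp]
        simp only [mul_add, add_mul, mul_one, mul_neg, neg_mul, neg_neg, mul_smul_comm,
          smul_mul_assoc, mul_assoc, sub_eq_add_neg]
    _ = 1 + (2⁻¹ : K) • (((2 : K) • e - f) * ((2 : K) • e - f)) := by
        rw [ffX, fX, hX]
        simp only [mul_add, add_mul, mul_sub, sub_mul, one_mul, mul_one, mul_smul_comm,
          smul_mul_assoc, ← mul_assoc, eee, efe, eefe, zero_mul]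
        match_scalars <;> field_simp <;> ring

-- The hypotheses say that only the representations of dimensions 1 and 3 occur.
theorem weylElt_sq_of_mul_mul_self_eq (R : Sl2Relations h e f) (h2 : (2 : K) ≠ 0)
    (eee : e * e * e = 0) (fff : f * f * f = 0) (efe : e * f * e = e) (fef : f * e * f = f) :
    weylElt K e f * weylElt K e f = 1 := by
  obtain ⟨k, hk⟩ : ∃ k, k = (2 : K) • e - f := ⟨_, rfl⟩
  have k_cube : k * (k * k) = (-4 : K) • k := by
    have fee : f * e * e = e - e * e * f := eq_sub_of_add_eq' (R.e_e_f_add_f_e_e efe)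
    have ffe : f * f * e = f - e * f * f := eq_sub_of_add_eq (R.symm.e_e_f_add_f_e_e fef)
    rw [hk]
    simp only [mul_sub, sub_mul, smul_mul_assoc, mul_smul_comm, ← mul_assoc, eee, fff, efe, fef,
      fee, ffe]
    module
  calc weylElt K e f * weylElt K e f
      = 1 + k * k + (2⁻¹ * 2⁻¹ : K) • (k * (k * (k * k))) := by
        rw [R.weylElt_of_mul_mul_self_eq h2 eee efe fef, ← hk]
        simp only [mul_add, add_mul, mul_one, one_mul, mul_assoc, smul_mul_assoc, mul_smul_comm]
        match_scalars <;> field_simp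
        ring
    _ = 1 := by
        rw [k_cube, mul_smul_comm]
        match_scalars <;> field_simp
        ring

end Sl2Relations

/-- `θ` is an endomorphism of the algebra `(M, μ)`. -/
def IsMulHom (μ : M →ₗ[K] M →ₗ[K] M) (θ : Module.End K M) : Prop :=
  ∀ x y, θ (μ x y) = μ (θ x) (θ y)

theorem IsMulHom.mul {μ : M →ₗ[K] M →ₗ[K] M} {θ θ' : Module.End K M} (h : IsMulHom μ θ)
    (h' : IsMulHom μ θ') : IsMulHom μ (θ * θ') := fun x y => by
  rw [Module.End.mul_apply, h', h, Module.End.mul_apply, Module.End.mul_apply]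

namespace IsDerivation

variable {μ : M →ₗ[K] M →ₗ[K] M} {D D' : Module.End K M}

theorem smul (h : IsDerivation μ D) (c : K) : IsDerivation μ (c • D) := fun x y => by
  simp only [LinearMap.smul_apply, h x y, smul_add, map_smul]

theorem isMulHom_truncExp (h : IsDerivation μ D) (h2 : (2 : K) ≠ 0) (h3 : (3 : K) ≠ 0)
    (hD : D * D * D = 0) : IsMulHom μ (truncExp K D) := fun x y => by
  have D_cube (z : M) : D (D (D z)) = 0 := LinearMap.congr_fun hD z
  have degree_three (z w : M) : μ (D (D z)) (D w) + μ (D z) (D (D w)) = 0 := by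
    have := D_cube (μ z w)
    simp only [h z, h (D z), h (D (D z)), map_add, D_cube, map_zero,
      LinearMap.zero_apply] at this
    refine (smul_eq_zero_iff_right h3).1 ?_
    linear_combination (norm := module) this
  have degree_four : μ (D (D x)) (D (D y)) = 0 := by
    simpa only [D_cube, map_zero, LinearMap.zero_apply, zero_add] using degree_three (D x) y
  simp only [truncExp, LinearMap.add_apply, LinearMap.smul_apply, Module.End.mul_apply,
    Module.End.one_apply, h x y, h (D x) y, h x (D y), map_add, map_smul]
  linear_combination (norm := (match_scalars <;> field_simp <;> ring))
    (-2⁻¹ : K) • degree_three x y - (2⁻¹ * 2⁻¹ : K) • degree_four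

theorem isMulHom_weylElt (hD : IsDerivation μ D) (hD' : IsDerivation μ D') (h2 : (2 : K) ≠ 0)
    (h3 : (3 : K) ≠ 0) (hDDD : D * D * D = 0) (hDDD' : D' * D' * D' = 0) :
    IsMulHom μ (weylElt K D D') := by
  have hexp := (hD.smul 2).isMulHom_truncExp h2 h3 (by
    rw [smul_mul_smul_comm, smul_mul_smul_comm, hDDD, smul_zero])
  refine (hexp.mul ?_).mul hexp
  rw [← neg_one_smul K D']
  refine (hD'.smul (-1)).isMulHom_truncExp h2 h3 ?_
  rw [smul_mul_smul_comm, smul_mul_smul_comm, hDDD', smul_zero]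

end IsDerivation

/-! ### Copies of `sl₂` -/

/-- `L` is spanned by `H, e, f`, which multiply as in `Sl2Relations`; such an `L` is a homomorphic
image of `sl₂`. -/
structure IsSl2Span (μ : M →ₗ[K] M →ₗ[K] M) (L : Submodule K M) (H e f : M) : Prop where
  eq_span : L = Submodule.span K {H, e, f}
  mul_h_e : μ H e = e
  mul_f_h : μ f H = f
  mul_e_f : μ e f = H

namespace IsSl2Span

variable {μ : M →ₗ[K] M →ₗ[K] M} {L : Submodule K M} {H e f x y z w u v : M}

theorem h_mem (S : IsSl2Span μ L H e f) : H ∈ L :=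
  S.eq_span ▸ Submodule.subset_span (by simp)

theorem e_mem (S : IsSl2Span μ L H e f) : e ∈ L :=
  S.eq_span ▸ Submodule.subset_span (by simp)

theorem f_mem (S : IsSl2Span μ L H e f) : f ∈ L :=
  S.eq_span ▸ Submodule.subset_span (by simp)

theorem mem_iff (S : IsSl2Span μ L H e f) :
    x ∈ L ↔ ∃ a b c : K, a • H + b • e + c • f = x := by
  rw [S.eq_span, Submodule.mem_span_triple]

theorem of_mul_eq {E F : M} (h : IsMalcev μ) (h2 : (2 : K) ≠ 0) (hEH : μ E H = E)
    (hFH : μ F H = -F) (hEF : μ E F = (2⁻¹ : K) • H) (hL : L = Submodule.span K {E, H, F}) :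
    IsSl2Span μ L (-H) E ((-2 : K) • F) where
  eq_span := by
    ext x
    rw [hL, Submodule.mem_span_triple, Submodule.mem_span_triple]
    constructor <;> rintro ⟨a, b, c, rfl⟩
    · refine ⟨-b, a, -(2⁻¹ * c), ?_⟩
      match_scalars <;> field_simp
    · exact ⟨b, -a, -2 * c, by module⟩
  mul_h_e := by rw [map_neg, LinearMap.neg_apply, ← h.anticomm, hEH]
  mul_f_h := by rw [map_neg, map_smul, LinearMap.smul_apply, hFH, smul_neg, neg_neg]
  mul_e_f := by rw [map_smul, hEF, smul_smul, neg_mul, mul_inv_cancel₀ h2, neg_one_smul]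

theorem symm (S : IsSl2Span μ L H e f) (h : IsMalcev μ) : IsSl2Span μ L (-H) f e where
  eq_span := by
    refine le_antisymm (fun x hx => ?_) (Submodule.span_le.2 ?_)
    · obtain ⟨a, b, c, rfl⟩ := S.mem_iff.1 hx
      exact Submodule.mem_span_triple.2 ⟨-a, c, b, by module⟩
    · simp only [Set.insert_subset_iff, Set.singleton_subset_iff, SetLike.mem_coe, neg_mem_iff]
      exact ⟨S.h_mem, S.f_mem, S.e_mem⟩
  mul_h_e := by rw [map_neg, LinearMap.neg_apply, ← h.anticomm, S.mul_f_h]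
  mul_f_h := by rw [map_neg, ← h.anticomm, S.mul_h_e]
  mul_e_f := by rw [h.anticomm, S.mul_e_f]

theorem isLieSubalg (S : IsSl2Span μ L H e f) (h : IsMalcev μ) : IsLieSubalg μ L where
  mul_mem x hx y hy := by
    obtain ⟨a, b, c, rfl⟩ := S.mem_iff.1 hx
    obtain ⟨a', b', c', rfl⟩ := S.mem_iff.1 hy
    refine S.mem_iff.2 ⟨b * c' - c * b', a * b' - b * a', c * a' - a * c', ?_⟩
    simp only [map_add, map_smul, LinearMap.add_apply, LinearMap.smul_apply, h.1, S.mul_h_e,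
      S.mul_f_h, S.mul_e_f, h.anticomm e H, h.anticomm H f, h.anticomm f e]
    module
  mjac_eq_zero x hx y hy z hz := by
    obtain ⟨a, b, c, rfl⟩ := S.mem_iff.1 hx
    obtain ⟨a', b', c', rfl⟩ := S.mem_iff.1 hy
    obtain ⟨a'', b'', c'', rfl⟩ := S.mem_iff.1 hz
    simp only [mjac, map_add, map_smul, map_neg, map_zero, LinearMap.add_apply,
      LinearMap.smul_apply, LinearMap.neg_apply, LinearMap.zero_apply, h.1, S.mul_h_e,
      S.mul_f_h, S.mul_e_f, h.anticomm e H, h.anticomm H f, h.anticomm f e]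
    module

theorem exists_malcevDer_eq (S : IsSl2Span μ L H e f) (h : IsMalcev μ) (hx : x ∈ L) (hy : y ∈ L) :
    ∃ a b c : K, μ x y = a • μ H e + b • μ f H + c • μ e f ∧
      malcevDer μ x y = a • malcevDer μ H e + b • malcevDer μ f H + c • malcevDer μ e f := by
  obtain ⟨a, b, c, rfl⟩ := S.mem_iff.1 hx
  obtain ⟨a', b', c', rfl⟩ := S.mem_iff.1 hy
  refine ⟨a * b' - b * a', c * a' - a * c', b * c' - c * b', ?_, ?_⟩
  · simp only [map_add, map_smul, LinearMap.add_apply, LinearMap.smul_apply, h.1,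
      h.anticomm e H, h.anticomm H f, h.anticomm f e]
    module
  · simp only [malcevDer, Ring.lie_def, map_add, map_smul, map_neg, map_zero, LinearMap.add_apply,
      LinearMap.smul_apply, h.1, h.anticomm e H, h.anticomm H f, h.anticomm f e, add_mul, mul_add,
      smul_mul_assoc, mul_smul_comm]
    module

theorem exists_lieAct_eq_and_jacAct_eq (S : IsSl2Span μ L H e f) (h : IsMalcev μ) (hx : x ∈ L)
    (hy : y ∈ L) : ∃ a b c : K,
      lieAct μ x y = a • lieAct μ H e + b • lieAct μ f H + c • lieAct μ e f ∧
      jacAct μ x y = a • jacAct μ H e + b • jacAct μ f H + c • jacAct μ e f := by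
  obtain ⟨a, b, c, hmul, hder⟩ := S.exists_malcevDer_eq h hx hy
  refine ⟨a, b, c, ?_, ?_⟩ <;>
  · simp only [lieAct, jacAct, hder, hmul, map_add, map_smul]
    module

theorem sl2Relations_lieAct (S : IsSl2Span μ L H e f) (h : IsMalcev μ) (h3 : (3 : K) ≠ 0) :
    Sl2Relations (lieAct μ e f) (lieAct μ H e) (lieAct μ f H) := by
  have hL := S.isLieSubalg h
  constructor <;>
    simp only [h.lie_lieAct_lieAct hL h3, S.h_mem, S.e_mem, S.f_mem, S.mul_h_e, S.mul_f_h,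
      S.mul_e_f]

theorem sl2Relations_jacAct (S : IsSl2Span μ L H e f) (h : IsMalcev μ) (h6 : (6 : K) ≠ 0) :
    Sl2Relations (jacAct μ e f) (jacAct μ H e) (jacAct μ f H) := by
  have hL := S.isLieSubalg h
  constructor <;>
    simp only [h.lie_jacAct_jacAct hL h6, S.h_mem, S.e_mem, S.f_mem, S.mul_h_e, S.mul_f_h,
      S.mul_e_f]

theorem lieAct_mul_jacAct_h_e (S : IsSl2Span μ L H e f) (h : IsMalcev μ) (h2 : (2 : K) ≠ 0)
    (h3 : (3 : K) ≠ 0) (hx : x ∈ L) (hy : y ∈ L) : lieAct μ x y * jacAct μ H e = 0 := by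
  have hcomm {x y : M} (hx : x ∈ L) (hy : y ∈ L) : Commute (lieAct μ x y) (jacAct μ H e) :=
    h.commute_lieAct_jacAct (S.isLieSubalg h) hx hy S.h_mem S.e_mem
  have hmul : lieAct μ H e * jacAct μ H e = (2 : K) • (jacAct μ H e * jacAct μ H e) := by
    have := h.lmul_mul_jacAct_eq_zero (six_ne_zero_of_two_of_three h2 h3) S.mul_h_e
    nth_rw 1 [← S.mul_h_e] at this
    rwa [lmul_mul_eq μ h2 h3, sub_mul, smul_mul_assoc, sub_eq_zero] at this
  have hfe : Commute (lieAct μ f H) (lieAct μ H e * jacAct μ H e) := by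
    have hf := hcomm S.f_mem S.h_mem
    rw [hmul]
    exact (hf.mul_right hf).smul_right 2
  obtain ⟨hzero_h, hzero_e, hzero_f⟩ := (S.sl2Relations_lieAct h h3).mul_eq_zero_of_commute
    (hcomm S.h_mem S.e_mem).symm (hcomm S.f_mem S.h_mem).symm hfe
  obtain ⟨a, b, c, hxy, -⟩ := S.exists_lieAct_eq_and_jacAct_eq h hx hy
  simp only [hxy, add_mul, smul_mul_assoc, hzero_h, hzero_e, hzero_f, smul_zero, add_zero]

theorem lieAct_mul_jacAct (S : IsSl2Span μ L H e f) (h : IsMalcev μ) (h2 : (2 : K) ≠ 0)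
    (h3 : (3 : K) ≠ 0) (hx : x ∈ L) (hy : y ∈ L) (hz : z ∈ L) (hw : w ∈ L) :
    lieAct μ x y * jacAct μ z w = 0 := by
  have hzero_e := S.lieAct_mul_jacAct_h_e h h2 h3 hx hy
  have hzero_f : lieAct μ x y * jacAct μ f H = 0 := by
    rw [← h.jacAct_neg_left, (S.symm h).lieAct_mul_jacAct_h_e h h2 h3 hx hy]
  have hzero_h : lieAct μ x y * jacAct μ e f = 0 := by
    rw [← (S.sl2Relations_jacAct h (six_ne_zero_of_two_of_three h2 h3)).lie_e_f, Ring.lie_def,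
      mul_sub, ← mul_assoc, ← mul_assoc, hzero_e, hzero_f, zero_mul, zero_mul, sub_zero]
  obtain ⟨a, b, c, -, hzw⟩ := S.exists_lieAct_eq_and_jacAct_eq h hz hw
  simp only [hzw, mul_add, mul_smul_comm, hzero_h, hzero_e, hzero_f, smul_zero, add_zero]

theorem jacAct_mul_lieAct (S : IsSl2Span μ L H e f) (h : IsMalcev μ) (h2 : (2 : K) ≠ 0)
    (h3 : (3 : K) ≠ 0) (hx : x ∈ L) (hy : y ∈ L) (hz : z ∈ L) (hw : w ∈ L) :
    jacAct μ x y * lieAct μ z w = 0 := by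
  rw [← (h.commute_lieAct_jacAct (S.isLieSubalg h) hz hw hx hy).eq,
    S.lieAct_mul_jacAct h h2 h3 hz hw hx hy]

theorem jacAct_h_e_sq (S : IsSl2Span μ L H e f) (h : IsMalcev μ) (h2 : (2 : K) ≠ 0)
    (h3 : (3 : K) ≠ 0) : jacAct μ H e * jacAct μ H e = 0 := by
  have := h.lmul_mul_jacAct_eq_zero (six_ne_zero_of_two_of_three h2 h3) S.mul_h_e
  nth_rw 1 [← S.mul_h_e] at this
  rw [lmul_mul_eq μ h2 h3, sub_mul, S.lieAct_mul_jacAct h h2 h3 S.h_mem S.e_mem S.h_mem S.e_mem,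
    zero_sub, smul_mul_assoc, neg_eq_zero] at this
  exact (smul_eq_zero_iff_right h2).1 this

theorem jacAct_f_h_sq (S : IsSl2Span μ L H e f) (h : IsMalcev μ) (h2 : (2 : K) ≠ 0)
    (h3 : (3 : K) ≠ 0) : jacAct μ f H * jacAct μ f H = 0 := by
  rw [← h.jacAct_neg_left, (S.symm h).jacAct_h_e_sq h h2 h3]

theorem lmul_mul_lieAct_mul_lmul (S : IsSl2Span μ L H e f) (h : IsMalcev μ) (h2 : (2 : K) ≠ 0)
    (h3 : (3 : K) ≠ 0) {a b c d : M} (ha : a ∈ L) (hb : b ∈ L) (hx : x ∈ L) (hy : y ∈ L)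
    (hc : c ∈ L) (hd : d ∈ L) :
    lmul μ (μ a b) * lieAct μ x y * lmul μ (μ c d) =
      lieAct μ a b * lieAct μ x y * lieAct μ c d := by
  rw [lmul_mul_eq μ h2 h3, lmul_mul_eq μ h2 h3, sub_mul, smul_mul_assoc,
    S.jacAct_mul_lieAct h h2 h3 ha hb hx hy, smul_zero, sub_zero, mul_sub, mul_smul_comm,
    mul_assoc _ _ (jacAct μ c d), S.lieAct_mul_jacAct h h2 h3 hx hy hc hd, mul_zero, smul_zero,
    sub_zero]

theorem lieAct_mul_mul_add_eq_zero (S : IsSl2Span μ L H e f) (h : IsMalcev μ) (h2 : (2 : K) ≠ 0)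
    (h3 : (3 : K) ≠ 0) (hV : ∀ m, ∀ a ∈ L, ∀ b ∈ L, ∀ c ∈ L, mh μ m a b c c = 0) (hx : x ∈ L)
    (hy : y ∈ L) (hz : z ∈ L) (hw : w ∈ L) (hu : u ∈ L) (hv : v ∈ L) :
    lieAct μ x y * lieAct μ (μ u v) (μ x y) * lieAct μ z w +
      lieAct μ u v * lieAct μ (μ z w) (μ x y) * lieAct μ x y = 0 := by
  have mul_mem := (S.isLieSubalg h).mul_mem
  have hxy := mul_mem x hx y hy
  have hzw := mul_mem z hz w hw
  have huv := mul_mem u hu v hv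
  rw [← S.lmul_mul_lieAct_mul_lmul h h2 h3 hx hy huv hxy hz hw,
    ← S.lmul_mul_lieAct_mul_lmul h h2 h3 hu hv hzw hxy hx hy]
  exact h.lmul_mul_lieAct_mul_lmul_add h2 h3 fun m => hV m _ hzw _ huv _ hxy

theorem lieAct_h_e_cube (S : IsSl2Span μ L H e f) (h : IsMalcev μ) (h2 : (2 : K) ≠ 0)
    (h3 : (3 : K) ≠ 0) (hV : ∀ m, ∀ a ∈ L, ∀ b ∈ L, ∀ c ∈ L, mh μ m a b c c = 0) :
    lieAct μ H e * lieAct μ H e * lieAct μ H e = 0 := by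
  simpa only [S.mul_h_e, S.mul_e_f, h.lieAct_self, mul_zero, zero_mul, add_zero] using
    S.lieAct_mul_mul_add_eq_zero h h2 h3 hV S.h_mem S.e_mem S.h_mem S.e_mem S.e_mem S.f_mem

theorem lieAct_h_e_mul_f_h_mul_h_e (S : IsSl2Span μ L H e f) (h : IsMalcev μ) (h2 : (2 : K) ≠ 0)
    (h3 : (3 : K) ≠ 0) (hV : ∀ m, ∀ a ∈ L, ∀ b ∈ L, ∀ c ∈ L, mh μ m a b c c = 0) :
    lieAct μ H e * lieAct μ f H * lieAct μ H e = lieAct μ H e := by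
  have heh := S.lieAct_mul_mul_add_eq_zero h h2 h3 hV S.e_mem S.f_mem S.e_mem S.f_mem S.h_mem
    S.e_mem
  have eef := S.lieAct_mul_mul_add_eq_zero h h2 h3 hV S.h_mem S.e_mem S.f_mem S.h_mem S.e_mem
    S.f_mem
  simp only [S.mul_h_e, S.mul_e_f, h.lieAct_self, h.lieAct_swap H e, mul_neg, neg_mul, neg_eq_zero,
    mul_zero, zero_mul, add_zero] at heh
  rw [S.mul_h_e, S.mul_e_f, S.mul_f_h, h.lieAct_swap e f, mul_neg, neg_mul, add_neg_eq_zero] at eef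
  exact (S.sl2Relations_lieAct h h3).e_f_e_of_h_e_h heh eef

end IsSl2Span

/-! ### The grading automorphism -/

theorem isDerivation_lieAct_add_jacAct {μ : M →ₗ[K] M →ₗ[K] M} (h : IsMalcev μ)
    (h2 : (2 : K) ≠ 0) (h3 : (3 : K) ≠ 0) (x y : M) :
    IsDerivation μ (lieAct μ x y + jacAct μ x y) := by
  have := (h.isDerivation_malcevDer x y).smul (2⁻¹ : K)
  rwa [malcevDer_eq μ h2 h3, inv_smul_smul₀ h2] at this

/-- The operator `4 σ(e, f)²`. When `H, e, f` span a copy of `sl₂` in an algebra of the variety, it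
is the projection onto `J_M` along `N_M`. -/
def jacProj (μ : M →ₗ[K] M →ₗ[K] M) (e f : M) : Module.End K M :=
  (4 : K) • (jacAct μ e f * jacAct μ e f)

namespace IsSl2Span

variable {μ : M →ₗ[K] M →ₗ[K] M} {L : Submodule K M} {H e f x y m : M}

theorem lieAct_add_jacAct_h_e_cube (S : IsSl2Span μ L H e f) (h : IsMalcev μ) (h2 : (2 : K) ≠ 0)
    (h3 : (3 : K) ≠ 0) (hV : ∀ m, ∀ a ∈ L, ∀ b ∈ L, ∀ c ∈ L, mh μ m a b c c = 0) :
    (lieAct μ H e + jacAct μ H e) * (lieAct μ H e + jacAct μ H e) *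
      (lieAct μ H e + jacAct μ H e) = 0 := by
  have hls := S.lieAct_mul_jacAct h h2 h3 S.h_mem S.e_mem S.h_mem S.e_mem
  have hsl := S.jacAct_mul_lieAct h h2 h3 S.h_mem S.e_mem S.h_mem S.e_mem
  simp only [mul_add, add_mul, hls, hsl, S.jacAct_h_e_sq h h2 h3, S.lieAct_h_e_cube h h2 h3 hV,
    mul_assoc (lieAct μ H e) _ (jacAct μ H e), mul_zero, add_zero]

theorem weylElt_lieAct_sq (S : IsSl2Span μ L H e f) (h : IsMalcev μ) (h2 : (2 : K) ≠ 0)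
    (h3 : (3 : K) ≠ 0) (hV : ∀ m, ∀ a ∈ L, ∀ b ∈ L, ∀ c ∈ L, mh μ m a b c c = 0) :
    weylElt K (lieAct μ H e) (lieAct μ f H) * weylElt K (lieAct μ H e) (lieAct μ f H) = 1 := by
  have fff := (S.symm h).lieAct_h_e_cube h h2 h3 hV
  have fef := (S.symm h).lieAct_h_e_mul_f_h_mul_h_e h h2 h3 hV
  simp only [h.lieAct_neg_left, h.lieAct_neg_right] at fff fef
  exact (S.sl2Relations_lieAct h h3).weylElt_sq_of_mul_mul_self_eq h2
    (S.lieAct_h_e_cube h h2 h3 hV) fff (S.lieAct_h_e_mul_f_h_mul_h_e h h2 h3 hV) fef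

theorem weylElt_jacAct_sq (S : IsSl2Span μ L H e f) (h : IsMalcev μ) (h2 : (2 : K) ≠ 0)
    (h3 : (3 : K) ≠ 0) :
    weylElt K (jacAct μ H e) (jacAct μ f H) * weylElt K (jacAct μ H e) (jacAct μ f H) =
      1 - (2 : K) • jacProj μ e f := by
  rw [(S.sl2Relations_jacAct h (six_ne_zero_of_two_of_three h2 h3)).weylElt_sq_of_sq_eq_zero
    (K := K) (S.jacAct_h_e_sq h h2 h3) (S.jacAct_f_h_sq h h2 h3), jacProj]
  module

theorem weylElt_lieAct_add_jacAct_sq (S : IsSl2Span μ L H e f) (h : IsMalcev μ)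
    (h2 : (2 : K) ≠ 0) (h3 : (3 : K) ≠ 0)
    (hV : ∀ m, ∀ a ∈ L, ∀ b ∈ L, ∀ c ∈ L, mh μ m a b c c = 0) :
    weylElt K (lieAct μ H e + jacAct μ H e) (lieAct μ f H + jacAct μ f H) *
        weylElt K (lieAct μ H e + jacAct μ H e) (lieAct μ f H + jacAct μ f H) =
      1 - (2 : K) • jacProj μ e f := by
  have hls {x y z w : M} (hx : x ∈ L) (hy : y ∈ L) (hz : z ∈ L) (hw : w ∈ L) :=
    S.lieAct_mul_jacAct h h2 h3 hx hy hz hw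
  have hsl {x y z w : M} (hx : x ∈ L) (hy : y ∈ L) (hz : z ∈ L) (hw : w ∈ L) :=
    S.jacAct_mul_lieAct h h2 h3 hx hy hz hw
  obtain ⟨weyl_add, weyl_comm⟩ := weylElt_add_of_mul_eq_zero (K := K)
    (hls S.h_mem S.e_mem S.h_mem S.e_mem) (hsl S.h_mem S.e_mem S.h_mem S.e_mem)
    (hls S.h_mem S.e_mem S.f_mem S.h_mem) (hsl S.f_mem S.h_mem S.h_mem S.e_mem)
    (hls S.f_mem S.h_mem S.h_mem S.e_mem) (hsl S.h_mem S.e_mem S.f_mem S.h_mem)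
    (hls S.f_mem S.h_mem S.f_mem S.h_mem) (hsl S.f_mem S.h_mem S.f_mem S.h_mem)
  rw [weyl_add, weyl_comm.symm.mul_mul_mul_comm, S.weylElt_lieAct_sq h h2 h3 hV,
    S.weylElt_jacAct_sq h h2 h3, one_mul]

theorem isMulHom_one_sub_two_smul_jacProj (S : IsSl2Span μ L H e f) (h : IsMalcev μ)
    (h2 : (2 : K) ≠ 0) (h3 : (3 : K) ≠ 0)
    (hV : ∀ m, ∀ a ∈ L, ∀ b ∈ L, ∀ c ∈ L, mh μ m a b c c = 0) :
    IsMulHom μ (1 - (2 : K) • jacProj μ e f) := by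
  have e_cube := S.lieAct_add_jacAct_h_e_cube h h2 h3 hV
  have f_cube := (S.symm h).lieAct_add_jacAct_h_e_cube h h2 h3 hV
  rw [h.lieAct_neg_left, h.jacAct_neg_left] at f_cube
  have weyl_hom := (isDerivation_lieAct_add_jacAct h h2 h3 H e).isMulHom_weylElt
    (isDerivation_lieAct_add_jacAct h h2 h3 f H) h2 h3 e_cube f_cube
  rw [← S.weylElt_lieAct_add_jacAct_sq h h2 h3 hV]
  exact weyl_hom.mul weyl_hom

theorem jacAct_mul_jacProj (S : IsSl2Span μ L H e f) (h : IsMalcev μ) (h2 : (2 : K) ≠ 0)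
    (h3 : (3 : K) ≠ 0) (hx : x ∈ L) (hy : y ∈ L) : jacAct μ x y * jacProj μ e f = jacAct μ x y := by
  have R := S.sl2Relations_jacAct h (six_ne_zero_of_two_of_three h2 h3)
  have he := S.jacAct_h_e_sq h h2 h3
  have hf := S.jacAct_f_h_sq h h2 h3
  obtain ⟨a, b, c, -, hxy⟩ := S.exists_lieAct_eq_and_jacAct_eq h hx hy
  simp only [hxy, jacProj, add_mul, smul_mul_assoc, R.e_mul_four_h_sq_of_sq_eq_zero he,
    R.f_mul_four_h_sq_of_sq_eq_zero hf, R.h_mul_four_h_sq_of_sq_eq_zero he hf]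

theorem lieAct_mul_jacProj (S : IsSl2Span μ L H e f) (h : IsMalcev μ) (h2 : (2 : K) ≠ 0)
    (h3 : (3 : K) ≠ 0) (hx : x ∈ L) (hy : y ∈ L) : lieAct μ x y * jacProj μ e f = 0 := by
  rw [jacProj, mul_smul_comm, ← mul_assoc, S.lieAct_mul_jacAct h h2 h3 hx hy S.e_mem S.f_mem,
    zero_mul, smul_zero]

theorem jacProj_mul_self (S : IsSl2Span μ L H e f) (h : IsMalcev μ) (h2 : (2 : K) ≠ 0)
    (h3 : (3 : K) ≠ 0) : jacProj μ e f * jacProj μ e f = jacProj μ e f := by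
  conv_lhs => rw [jacProj.eq_def]
  rw [smul_mul_assoc, mul_assoc, ← jacProj, S.jacAct_mul_jacProj h h2 h3 S.e_mem S.f_mem, jacProj]

theorem mem_NMker_iff (S : IsSl2Span μ L H e f) (h : IsMalcev μ) (h2 : (2 : K) ≠ 0)
    (h3 : (3 : K) ≠ 0) : m ∈ NMker μ L ↔ jacProj μ e f m = 0 := by
  have h6 := six_ne_zero_of_two_of_three h2 h3
  simp only [NMker, Submodule.mem_iInf, LinearMap.mem_ker, h.jop_eq_jacAct h6,
    LinearMap.smul_apply, smul_eq_zero_iff_right (neg_ne_zero.2 h6)]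
  refine ⟨fun hm => ?_, fun hm a ha b hb => ?_⟩
  · rw [jacProj, LinearMap.smul_apply, Module.End.mul_apply, hm e S.e_mem f S.f_mem, map_zero,
      smul_zero]
  · rw [← S.jacAct_mul_jacProj h h2 h3 ha hb, Module.End.mul_apply, hm, map_zero]

theorem eq_zero_of_lieAct_of_jacAct (S : IsSl2Span μ L H e f) (h : IsMalcev μ)
    (h2 : (2 : K) ≠ 0) (h3 : (3 : K) ≠ 0) (hfaith : ∀ m : M, m ≠ 0 → ∃ a ∈ L, μ m a ≠ 0)
    (hlie : ∀ a ∈ L, ∀ b ∈ L, lieAct μ a b m = 0) (hjac : ∀ a ∈ L, ∀ b ∈ L, jacAct μ a b m = 0) :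
    m = 0 := by
  have mul_apply_eq_zero : ∀ a ∈ L, ∀ b ∈ L, μ (μ a b) m = 0 := fun a ha b hb => by
    rw [← lmul_apply, lmul_mul_eq μ h2 h3, LinearMap.sub_apply, LinearMap.smul_apply,
      hlie a ha b hb, hjac a ha b hb, smul_zero, sub_zero]
  by_contra hm
  obtain ⟨x, hx, hmx⟩ := hfaith m hm
  refine hmx ?_
  obtain ⟨a, b, c, rfl⟩ := S.mem_iff.1 hx
  have hH : μ H m = 0 := by simpa only [S.mul_e_f] using mul_apply_eq_zero e S.e_mem f S.f_mem
  have he : μ e m = 0 := by simpa only [S.mul_h_e] using mul_apply_eq_zero H S.h_mem e S.e_mem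
  have hf : μ f m = 0 := by simpa only [S.mul_f_h] using mul_apply_eq_zero f S.f_mem H S.h_mem
  simp only [h.anticomm m, map_add, map_smul, LinearMap.add_apply, LinearMap.smul_apply, hH, he,
    hf, smul_zero, add_zero, neg_zero]

theorem mem_JMker_iff (S : IsSl2Span μ L H e f) (h : IsMalcev μ) (h2 : (2 : K) ≠ 0)
    (h3 : (3 : K) ≠ 0) (hfaith : ∀ m : M, m ≠ 0 → ∃ a ∈ L, μ m a ≠ 0) :
    m ∈ JMker μ L ↔ jacProj μ e f m = m := by
  simp only [JMker, Submodule.mem_iInf, LinearMap.mem_ker, h.bop_eq_lieAct h3,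
    LinearMap.smul_apply, smul_eq_zero_iff_right (neg_ne_zero.2 h3)]
  refine ⟨fun hm => ?_, fun hm a ha b hb => ?_⟩
  · refine (sub_eq_zero.1 (S.eq_zero_of_lieAct_of_jacAct h h2 h3 hfaith ?_ ?_)).symm
    · intro a ha b hb
      rw [map_sub, hm a ha b hb, ← Module.End.mul_apply, S.lieAct_mul_jacProj h h2 h3 ha hb,
        LinearMap.zero_apply, sub_zero]
    · intro a ha b hb
      rw [map_sub, ← Module.End.mul_apply, S.jacAct_mul_jacProj h h2 h3 ha hb, sub_self]
  · rw [← hm, ← Module.End.mul_apply, S.lieAct_mul_jacProj h h2 h3 ha hb, LinearMap.zero_apply]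

end IsSl2Span

theorem grading_of_isMulHom_one_sub_two_smul {μ : M →ₗ[K] M →ₗ[K] M} (h2 : (2 : K) ≠ 0)
    {p : Module.End K M} (hp : p * p = p) (hθ : IsMulHom μ (1 - (2 : K) • p)) {N J : Submodule K M}
    (hN : ∀ x, x ∈ N ↔ p x = 0) (hJ : ∀ x, x ∈ J ↔ p x = x) :
    N ⊓ J = ⊥ ∧ N ⊔ J = ⊤ ∧ (∀ x ∈ N, ∀ y ∈ N, μ x y ∈ N) ∧ (∀ x ∈ N, ∀ y ∈ J, μ x y ∈ J) ∧
      (∀ x ∈ J, ∀ y ∈ N, μ x y ∈ J) ∧ (∀ x ∈ J, ∀ y ∈ J, μ x y ∈ N) := by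
  have hN' (x : M) : x ∈ N ↔ (1 - (2 : K) • p) x = x := by
    rw [hN, LinearMap.sub_apply, LinearMap.smul_apply, Module.End.one_apply, sub_eq_self,
      smul_eq_zero_iff_right h2]
  have hJ' (x : M) : x ∈ J ↔ (1 - (2 : K) • p) x = -x := by
    rw [hJ, LinearMap.sub_apply, LinearMap.smul_apply, Module.End.one_apply, sub_eq_iff_eq_add,
      neg_add_eq_sub, eq_sub_iff_add_eq, ← two_smul K x, smul_right_inj h2, eq_comm]
  have hpp (x : M) : p (p x) = p x := LinearMap.congr_fun hp x
  refine ⟨?_, ?_, ?_, ?_, ?_, ?_⟩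
  · refine (Submodule.eq_bot_iff _).2 fun x hx => ?_
    rw [← (hJ x).1 hx.2, (hN x).1 hx.1]
  · refine Submodule.eq_top_iff'.2 fun x => ?_
    rw [← sub_add_cancel x (p x)]
    refine Submodule.add_mem_sup ((hN _).2 ?_) ((hJ _).2 (hpp x))
    rw [map_sub, hpp, sub_self]
  all_goals
    simp only [hN', hJ']
    intro x hx y hy
    rw [hθ, hx, hy]
  · rw [map_neg]
  · rw [map_neg, LinearMap.neg_apply]
  · rw [map_neg, map_neg, LinearMap.neg_apply, neg_neg]

theorem stmt6_general
    (h2 : (2 : K) ≠ 0) (h3 : (3 : K) ≠ 0)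
    (μ : M →ₗ[K] M →ₗ[K] M) (hMal : IsMalcev μ)
    (E H F : M) (hEH : μ E H = E) (hFH : μ F H = -F) (hEF : μ E F = (2⁻¹ : K) • H)
    (L : Submodule K M) (hL : L = Submodule.span K {E, H, F})
    (hVarL : ∀ m, ∀ a ∈ L, ∀ b ∈ L, ∀ c ∈ L, mh μ m a b c c = 0)
    (hfaith : ∀ m : M, m ≠ 0 → ∃ a ∈ L, μ m a ≠ 0) :
    NMker μ L ⊓ JMker μ L = ⊥ ∧
    NMker μ L ⊔ JMker μ L = ⊤ ∧
    (∀ x ∈ NMker μ L, ∀ y ∈ NMker μ L, μ x y ∈ NMker μ L) ∧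
    (∀ x ∈ NMker μ L, ∀ y ∈ JMker μ L, μ x y ∈ JMker μ L) ∧
    (∀ x ∈ JMker μ L, ∀ y ∈ NMker μ L, μ x y ∈ JMker μ L) ∧
    (∀ x ∈ JMker μ L, ∀ y ∈ JMker μ L, μ x y ∈ NMker μ L) := by
  have S := IsSl2Span.of_mul_eq hMal h2 hEH hFH hEF hL
  exact grading_of_isMulHom_one_sub_two_smul h2 (S.jacProj_mul_self hMal h2 h3)
    (S.isMulHom_one_sub_two_smul_jacProj hMal h2 h3 hVarL)
    (fun _ => S.mem_NMker_iff hMal h2 h3) fun _ => S.mem_JMker_iff hMal h2 h3 hfaith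

/-- `M = N_M ⊕ J_M` is a ℤ/2-grading of the algebra `M`. -/
theorem stmt6
    (h2 : (2 : K) ≠ 0) (h3 : (3 : K) ≠ 0)
    (μ : M →ₗ[K] M →ₗ[K] M) (hMal : IsMalcev μ) (hVarH : InVarietyH μ)
    (E H F : M) (hind : LinearIndependent K ![E, H, F])
    (hEH : μ E H = E) (hFH : μ F H = -F) (hEF : μ E F = (2⁻¹ : K) • H)
    (L : Submodule K M) (hL : L = Submodule.span K {E, H, F})
    (hfaith : ∀ m : M, m ≠ 0 → ∃ a ∈ L, μ m a ≠ 0) :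
    NMker μ L ⊓ JMker μ L = ⊥ ∧
    NMker μ L ⊔ JMker μ L = ⊤ ∧
    (∀ x ∈ NMker μ L, ∀ y ∈ NMker μ L, μ x y ∈ NMker μ L) ∧
    (∀ x ∈ NMker μ L, ∀ y ∈ JMker μ L, μ x y ∈ JMker μ L) ∧
    (∀ x ∈ JMker μ L, ∀ y ∈ NMker μ L, μ x y ∈ JMker μ L) ∧
    (∀ x ∈ JMker μ L, ∀ y ∈ JMker μ L, μ x y ∈ NMker μ L) :=
  stmt6_general h2 h3 μ hMal E H F hEH hFH hEF L hL (fun m a _ b _ c _ => hVarH m a b c c) hfaith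

end
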